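/- arXiv:1909.04484 — 3 statements merged into one kernel-verified Lean document; each statement's English description precedes it below -/
import Mathlib

section
/- Take F(x) = x, so ψ^ε(β) = 2 + ε(1/E(β) − 2). For every ε > 0 and every δ > 0 there exists β with 2 < β < 2 + δ such that ψ^ε(β) > β. -/
/-- The orbit of `1` under the β-map `T_β(x) = βx mod 1`: `t₀ = 1`,
`t_{n+1} = β t_n − ⌊β t_n⌋`. -/
noncomputable def betaOrbit (β : ℝ) : ℕ → ℝ
  | 0 => 1
  | n + 1 => Int.fract (β * betaOrbit β n)

/-- `E(β) = (∑ t_n(β)²/(2βⁿ)) / (∑ t_n(β)/βⁿ)`, the expectation of the unique acim of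
the β-map. -/
noncomputable def Ebeta (β : ℝ) : ℝ :=
  (∑' n : ℕ, (betaOrbit β n) ^ 2 / (2 * β ^ n)) / (∑' n : ℕ, betaOrbit β n / β ^ n)

/-- `ψ^ε(β) = 2 + ε F(1/E(β) − 2)`. -/
noncomputable def psi (ε : ℝ) (F : ℝ → ℝ) (β : ℝ) : ℝ :=
  2 + ε * F (1 / Ebeta β - 2)

/-!
Write `β = k + η` with `k ≥ 2` an integer. The orbit of `1` escapes only slowly from the fixed
point `0`: `t_{n+1} = βⁿ η` for as long as this is below `1`. With `D` the mass and `S` the first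
moment of `h_β`, we have `1 / E(β) - 2 = (D - 2S) / S` and `D - 2S = ∑ t_n (1 - t_n) / βⁿ`. Each of
the early terms of this series is about `η / β`, because the factor `βⁿ` gained by the orbit cancels
the weight `β⁻ⁿ`. The number of such terms tends to infinity as `η → 0` while `S` stays bounded, so
`1 / E(β) - 2` is eventually larger than any fixed multiple of `η`, in particular than `η / ε`.
-/

open Filter Topology

lemma betaOrbit_mem_Icc (β : ℝ) : ∀ n, betaOrbit β n ∈ Set.Icc (0 : ℝ) 1
  | 0 => ⟨zero_le_one, le_rfl⟩
  | _ + 1 => ⟨Int.fract_nonneg _, (Int.fract_lt_one _).le⟩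

lemma betaOrbit_succ_eq_pow_mul {β : ℝ} {k : ℤ} (hβ : 1 ≤ β) (hk : k ≤ β) {n : ℕ}
    (hn : β ^ n * (β - k) < 1) : betaOrbit β (n + 1) = β ^ n * (β - k) := by
  have h_nonneg : 0 ≤ β ^ n * (β - k) := mul_nonneg (by positivity) (sub_nonneg.2 hk)
  induction n with
  | zero =>
    simp only [betaOrbit, pow_zero, one_mul, mul_one] at hn h_nonneg ⊢
    rw [← Int.fract_sub_intCast β k, Int.fract_eq_self.2 ⟨h_nonneg, hn⟩]
  | succ n ih =>
    have h_prev_nonneg : 0 ≤ β ^ n * (β - k) := mul_nonneg (by positivity) (sub_nonneg.2 hk)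
    have h_step : β * (β ^ n * (β - k)) = β ^ (n + 1) * (β - k) := by ring
    have h_prev : β ^ n * (β - k) < 1 :=
      ((le_mul_of_one_le_left h_prev_nonneg hβ).trans_eq h_step).trans_lt hn
    rw [betaOrbit, ih h_prev h_prev_nonneg, h_step, Int.fract_eq_self.2 ⟨h_nonneg, hn⟩]

lemma summable_div_pow_of_abs_le {β C : ℝ} (hβ : 1 < β) {u : ℕ → ℝ} (hu : ∀ n, |u n| ≤ C) :
    Summable fun n ↦ u n / β ^ n := by
  have hβ₀ : 0 < β := zero_lt_one.trans hβ
  refine .of_norm_bounded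
    ((summable_geometric_of_lt_one (inv_nonneg.2 hβ₀.le) (inv_lt_one_of_one_lt₀ hβ)).mul_left C)
    fun n ↦ ?_
  rw [Real.norm_eq_abs, abs_div, abs_of_pos (pow_pos hβ₀ n), inv_pow, ← div_eq_mul_inv]
  gcongr
  exact hu n

/-- The total mass `∫ h_β` of the unnormalised Parry density, written as the series obtained by
integrating `h_β` term by term. -/
noncomputable def parryMass (β : ℝ) : ℝ := ∑' n : ℕ, betaOrbit β n / β ^ n

/-- The first moment `∫ x h_β(x) dx` of the unnormalised Parry density, written as the series
obtained by integrating term by term; thus `E(β)` is its quotient by `parryMass β`. -/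
noncomputable def parryMoment (β : ℝ) : ℝ := ∑' n : ℕ, betaOrbit β n ^ 2 / (2 * β ^ n)

lemma Ebeta_eq_parryMoment_div_parryMass (β : ℝ) : Ebeta β = parryMoment β / parryMass β := rfl

section Parry

variable {β : ℝ}

lemma summable_parryMass (hβ : 1 < β) : Summable fun n ↦ betaOrbit β n / β ^ n :=
  summable_div_pow_of_abs_le (C := 1) hβ fun n ↦ by
    obtain ⟨h0, h1⟩ := betaOrbit_mem_Icc β n
    rwa [abs_of_nonneg h0]

lemma summable_parryMoment (hβ : 1 < β) : Summable fun n ↦ betaOrbit β n ^ 2 / (2 * β ^ n) := by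
  have h_sq : ∀ n, |betaOrbit β n ^ 2 / 2| ≤ 1 := fun n ↦ by
    obtain ⟨h0, h1⟩ := betaOrbit_mem_Icc β n
    rw [abs_of_nonneg (by positivity)]
    nlinarith
  simpa only [div_div] using summable_div_pow_of_abs_le hβ h_sq

lemma parryMoment_pos (hβ : 1 < β) : 0 < parryMoment β := by
  refine (summable_parryMoment hβ).tsum_pos (fun n ↦ by positivity) 0 ?_
  norm_num [betaOrbit]

lemma parryMoment_le (hβ : 1 < β) : parryMoment β ≤ β / (2 * (β - 1)) := by
  have hβ₀ : 0 < β := zero_lt_one.trans hβ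
  have hβ₁ : β - 1 ≠ 0 := (sub_pos.2 hβ).ne'
  have h_geom : HasSum (fun n : ℕ ↦ 1 / 2 * β⁻¹ ^ n) (1 / 2 * (1 - β⁻¹)⁻¹) :=
    (hasSum_geometric_of_lt_one (inv_nonneg.2 hβ₀.le) (inv_lt_one_of_one_lt₀ hβ)).mul_left _
  calc parryMoment β ≤ 1 / 2 * (1 - β⁻¹)⁻¹ := by
        refine hasSum_le (fun n ↦ ?_) (summable_parryMoment hβ).hasSum h_geom
        obtain ⟨h0, h1⟩ := betaOrbit_mem_Icc β n
        rw [inv_pow, ← one_div, div_mul_div_comm, one_mul]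
        gcongr
        exact pow_le_one₀ h0 h1
    _ = β / (2 * (β - 1)) := by field_simp

lemma hasSum_parryMass_sub_two_mul_parryMoment (hβ : 1 < β) :
    HasSum (fun n ↦ betaOrbit β n * (1 - betaOrbit β n) / β ^ n)
      (parryMass β - 2 * parryMoment β) := by
  have h_term : ∀ n, betaOrbit β n * (1 - betaOrbit β n) / β ^ n =
      betaOrbit β n / β ^ n - 2 * (betaOrbit β n ^ 2 / (2 * β ^ n)) := fun n ↦ by field_simp
  simp only [h_term]
  exact (summable_parryMass hβ).hasSum.sub ((summable_parryMoment hβ).hasSum.mul_left 2)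

lemma one_div_Ebeta_sub_two (hβ : 1 < β) :
    1 / Ebeta β - 2 = (parryMass β - 2 * parryMoment β) / parryMoment β := by
  have h_ne : parryMoment β ≠ 0 := (parryMoment_pos hβ).ne'
  rw [Ebeta_eq_parryMoment_div_parryMass]
  field_simp

lemma le_parryMass_sub_two_mul_parryMoment {k : ℤ} (hβ : 1 < β) (hk : k ≤ β) {N : ℕ}
    (hN : β ^ N * (β - k) ≤ 1 / 2) :
    N * ((β - k) / (2 * β)) ≤ parryMass β - 2 * parryMoment β := by
  have hη : 0 ≤ β - k := sub_nonneg.2 hk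
  have h_nonneg : ∀ n, 0 ≤ betaOrbit β n * (1 - betaOrbit β n) / β ^ n := fun n ↦ by
    obtain ⟨h0, h1⟩ := betaOrbit_mem_Icc β n
    exact div_nonneg (mul_nonneg h0 (sub_nonneg.2 h1)) (by positivity)
  have h_term : ∀ n < N, (β - k) / (2 * β) ≤
      betaOrbit β (n + 1) * (1 - betaOrbit β (n + 1)) / β ^ (n + 1) := fun n hn ↦ by
    have h_half : β ^ n * (β - k) ≤ 1 / 2 :=
      (mul_le_mul_of_nonneg_right (pow_le_pow_right₀ hβ.le hn.le) hη).trans hN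
    rw [betaOrbit_succ_eq_pow_mul hβ.le hk (by linarith)]
    calc (β - k) / (2 * β) = (β - k) * (1 / 2) / β := by field_simp
      _ ≤ (β - k) * (1 - β ^ n * (β - k)) / β := by gcongr; linarith
      _ = β ^ n * (β - k) * (1 - β ^ n * (β - k)) / β ^ (n + 1) := by field_simp; ring
  calc N * ((β - k) / (2 * β))
      = ∑ n ∈ Finset.range N, (β - k) / (2 * β) := by simp
    _ ≤ ∑ n ∈ Finset.range N,
          betaOrbit β (n + 1) * (1 - betaOrbit β (n + 1)) / β ^ (n + 1) :=
        Finset.sum_le_sum fun n hn ↦ h_term n (Finset.mem_range.1 hn)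
    _ ≤ ∑ n ∈ Finset.range (N + 1), betaOrbit β n * (1 - betaOrbit β n) / β ^ n := by
        rw [Finset.sum_range_succ']
        exact le_add_of_nonneg_right (h_nonneg 0)
    _ ≤ parryMass β - 2 * parryMoment β :=
        sum_le_hasSum _ (fun n _ ↦ h_nonneg n) (hasSum_parryMass_sub_two_mul_parryMoment hβ)

lemma le_one_div_Ebeta_sub_two {k : ℤ} (hβ : 1 < β) (hk : k ≤ β) {N : ℕ}
    (hN : β ^ N * (β - k) ≤ 1 / 2) :
    N * ((β - 1) / β ^ 2) * (β - k) ≤ 1 / Ebeta β - 2 := by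
  have hβ₁ : β - 1 ≠ 0 := (sub_pos.2 hβ).ne'
  have h_nonneg : 0 ≤ N * ((β - k) / (2 * β)) :=
    mul_nonneg N.cast_nonneg (div_nonneg (sub_nonneg.2 hk) (by positivity))
  have h_le := le_parryMass_sub_two_mul_parryMoment hβ hk hN
  calc N * ((β - 1) / β ^ 2) * (β - k)
      = N * ((β - k) / (2 * β)) / (β / (2 * (β - 1))) := by field_simp
    _ ≤ (parryMass β - 2 * parryMoment β) / parryMoment β :=
        div_le_div₀ (h_nonneg.trans h_le) h_le (parryMoment_pos hβ) (parryMoment_le hβ)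
    _ = 1 / Ebeta β - 2 := (one_div_Ebeta_sub_two hβ).symm

end Parry

theorem tendsto_one_div_Ebeta_sub_two_div_sub_atTop {k : ℤ} (hk : 1 < k) :
    Tendsto (fun β ↦ (1 / Ebeta β - 2) / (β - k)) (𝓝[>] (k : ℝ)) atTop := by
  have hk₁ : (1 : ℝ) < k := mod_cast hk
  have hk₀ : (k : ℝ) ^ 2 ≠ 0 := by positivity
  refine tendsto_atTop.2 fun C ↦ ?_
  obtain ⟨N, hN⟩ : ∃ N : ℕ, C / (((k : ℝ) - 1) / k ^ 2) < N := exists_nat_gt _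
  have h_rate : ∀ᶠ β : ℝ in 𝓝 (k : ℝ), C < N * ((β - 1) / β ^ 2) := by
    have h_cont : ContinuousAt (fun β : ℝ ↦ N * ((β - 1) / β ^ 2)) k := by
      fun_prop (disch := exact hk₀)
    refine continuousAt_const.eventually_lt h_cont ?_
    rwa [div_lt_iff₀ (div_pos (sub_pos.2 hk₁) (by positivity))] at hN
  have h_escape : ∀ᶠ β : ℝ in 𝓝 (k : ℝ), β ^ N * (β - k) < 1 / 2 := by
    have h_cont : ContinuousAt (fun β : ℝ ↦ β ^ N * (β - k)) k := by fun_prop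
    refine h_cont.eventually_lt continuousAt_const ?_
    norm_num
  filter_upwards [self_mem_nhdsWithin, nhdsWithin_le_nhds h_rate, nhdsWithin_le_nhds h_escape]
    with β (hβ : k < β) h_rate h_escape
  rw [le_div_iff₀ (sub_pos.2 hβ)]
  calc C * (β - k) ≤ N * ((β - 1) / β ^ 2) * (β - k) :=
        mul_le_mul_of_nonneg_right h_rate.le (sub_pos.2 hβ).le
    _ ≤ 1 / Ebeta β - 2 := le_one_div_Ebeta_sub_two (hk₁.trans hβ) hβ.le h_escape.le

/-- For `F = id` and any `ε > 0`, arbitrarily close to `2` there are `β` with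
`ψ^ε(β) > β`. -/
theorem stmt7 (ε : ℝ) (hε : 0 < ε) (δ : ℝ) (hδ : 0 < δ) :
    ∃ β : ℝ, 2 < β ∧ β < 2 + δ ∧ β < psi ε id β := by
  have h_slope : ∀ᶠ β in 𝓝[>] (2 : ℝ), 1 / ε < (1 / Ebeta β - 2) / (β - 2) := by
    simpa using (tendsto_one_div_Ebeta_sub_two_div_sub_atTop one_lt_two).eventually_gt_atTop (1 / ε)
  have h_near : ∀ᶠ β in 𝓝[>] (2 : ℝ), β ∈ Set.Ioo 2 (2 + δ) :=
    Ioo_mem_nhdsGT (by linarith)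
  obtain ⟨β, h_slope, hβ, hβδ⟩ := (h_slope.and h_near).exists
  refine ⟨β, hβ, hβδ, ?_⟩
  rw [div_lt_div_iff₀ hε (sub_pos.2 hβ)] at h_slope
  simp only [psi, id]
  linarith
end

section
/- Let 2 < β < 3, set η = β − 2 and N = ⌈log η / log(1/β)⌉ (a positive integer since 0 < η < 1). Then ∑_{n=1}^∞ t_n(β)/βⁿ ≤ N·η + β^{−N}, and consequently 1/2 − E(β) ≤ (1/2)·(N·η + β^{−N}). -/
/-!
Let `η` be the fractional part of `β`, so that `t₁ = η`. Since `⌊β tₙ⌋ ≥ 0`, the orbit then grows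
at most geometrically: `tₙ₊₁ ≤ βⁿ η`. Thus every term `tₙ / βⁿ` with `n ≥ 1` is at most `η / β`,
while the terms of index greater than `M` sum to at most `β⁻ᴹ / (β - 1)` because `tₙ ≤ 1`. Any
truncation index `M` is allowed; `N` is the first one with `β⁻ᴺ ≤ η`.

For `E(β)`, write `S` for the tail sum. The term `n = 0` alone makes the numerator at least `1/2`,
and the denominator is `1 + S`, so `E(β) ≥ (1/2) / (1 + S) ≥ (1/2) (1 - S)`.
-/

section Orbit

variable (β : ℝ) (n : ℕ)

theorem betaOrbit_nonneg : 0 ≤ betaOrbit β n := by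
  cases n with
  | zero => exact zero_le_one
  | succ n => exact Int.fract_nonneg _

theorem betaOrbit_le_one : betaOrbit β n ≤ 1 := by
  cases n with
  | zero => exact le_rfl
  | succ n => exact (Int.fract_lt_one _).le

theorem betaOrbit_one : betaOrbit β 1 = Int.fract β := by
  simp only [betaOrbit, mul_one]

variable {β}

theorem betaOrbit_succ_le_mul (hβ : 0 ≤ β) : betaOrbit β (n + 1) ≤ β * betaOrbit β n :=
  have hfloor : (0 : ℝ) ≤ ⌊β * betaOrbit β n⌋ :=
    Int.cast_nonneg (Int.floor_nonneg.2 (mul_nonneg hβ (betaOrbit_nonneg β n)))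
  sub_le_self _ hfloor

theorem betaOrbit_succ_le_pow_mul_fract (hβ : 0 ≤ β) :
    betaOrbit β (n + 1) ≤ β ^ n * Int.fract β := by
  induction n with
  | zero => rw [pow_zero, one_mul, zero_add, betaOrbit_one]
  | succ n ih =>
    calc betaOrbit β (n + 1 + 1) ≤ β * betaOrbit β (n + 1) := betaOrbit_succ_le_mul _ hβ
      _ ≤ β * (β ^ n * Int.fract β) := by gcongr
      _ = β ^ (n + 1) * Int.fract β := by ring

end Orbit

section Series

variable {β : ℝ}

theorem betaOrbit_div_pow_nonneg (hβ : 0 ≤ β) (n : ℕ) : 0 ≤ betaOrbit β n / β ^ n :=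
  div_nonneg (betaOrbit_nonneg β n) (pow_nonneg hβ n)

theorem betaOrbit_div_pow_le_inv_pow (hβ : 0 ≤ β) (n : ℕ) :
    betaOrbit β n / β ^ n ≤ β⁻¹ ^ n := by
  rw [inv_pow, ← one_div]
  gcongr
  exact betaOrbit_le_one β n

theorem betaOrbit_succ_div_pow_le_fract_div (hβ : 0 < β) (n : ℕ) :
    betaOrbit β (n + 1) / β ^ (n + 1) ≤ Int.fract β / β := by
  calc betaOrbit β (n + 1) / β ^ (n + 1)
      ≤ β ^ n * Int.fract β / β ^ (n + 1) := by
        gcongr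
        exact betaOrbit_succ_le_pow_mul_fract n hβ.le
    _ = Int.fract β / β := by rw [pow_succ, mul_div_mul_left _ _ (pow_pos hβ n).ne']

theorem summable_betaOrbit_div_pow (hβ : 1 < β) :
    Summable fun n : ℕ => betaOrbit β n / β ^ n :=
  have hβ₀ : 0 ≤ β := zero_le_one.trans hβ.le
  .of_nonneg_of_le (betaOrbit_div_pow_nonneg hβ₀) (betaOrbit_div_pow_le_inv_pow hβ₀)
    (summable_geometric_of_lt_one (inv_nonneg.2 hβ₀) (inv_lt_one_of_one_lt₀ hβ))

theorem tsum_betaOrbit_div_pow_eq_one_add (hβ : 1 < β) :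
    ∑' n : ℕ, betaOrbit β n / β ^ n = 1 + ∑' n : ℕ, betaOrbit β (n + 1) / β ^ (n + 1) := by
  rw [(summable_betaOrbit_div_pow hβ).tsum_eq_zero_add, pow_zero, div_one, betaOrbit]

theorem tsum_nat_add_betaOrbit_div_pow_le (hβ : 1 < β) (k : ℕ) :
    ∑' n : ℕ, betaOrbit β (n + k) / β ^ (n + k) ≤ (1 - β⁻¹)⁻¹ * β⁻¹ ^ k := by
  have hβ₀ : 0 ≤ β := zero_le_one.trans hβ.le
  have hgeom : HasSum (fun n : ℕ => β⁻¹ ^ (n + k)) ((1 - β⁻¹)⁻¹ * β⁻¹ ^ k) := by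
    simpa only [pow_add] using (hasSum_geometric_of_lt_one (inv_nonneg.2 hβ₀)
      (inv_lt_one_of_one_lt₀ hβ)).mul_right (β⁻¹ ^ k)
  have horbit : Summable fun n : ℕ => betaOrbit β (n + k) / β ^ (n + k) :=
    (summable_nat_add_iff k).2 (summable_betaOrbit_div_pow hβ)
  exact hasSum_le (fun n => betaOrbit_div_pow_le_inv_pow hβ₀ (n + k)) horbit.hasSum hgeom

theorem tsum_betaOrbit_succ_div_pow_le (hβ : 1 < β) (M : ℕ) :
    ∑' n : ℕ, betaOrbit β (n + 1) / β ^ (n + 1) ≤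
      M * (Int.fract β / β) + (β ^ M)⁻¹ / (β - 1) := by
  have hβ₀ : 0 < β := zero_lt_one.trans hβ
  have hβ₁ : β - 1 ≠ 0 := (sub_pos.2 hβ).ne'
  have hhead : ∑ n ∈ Finset.range M, betaOrbit β (n + 1) / β ^ (n + 1) ≤
      M * (Int.fract β / β) := by
    simpa only [Finset.card_range, nsmul_eq_mul] using
      Finset.sum_le_card_nsmul (Finset.range M) _ _
        fun n _ => betaOrbit_succ_div_pow_le_fract_div hβ₀ n
  have htail : ∑' n : ℕ, betaOrbit β (n + M + 1) / β ^ (n + M + 1) ≤ (β ^ M)⁻¹ / (β - 1) :=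
    calc ∑' n : ℕ, betaOrbit β (n + M + 1) / β ^ (n + M + 1)
        ≤ (1 - β⁻¹)⁻¹ * β⁻¹ ^ (M + 1) := tsum_nat_add_betaOrbit_div_pow_le hβ (M + 1)
      _ = (β ^ M)⁻¹ / (β - 1) := by
        rw [pow_succ, inv_pow]
        field_simp
  have hsummable : Summable fun n : ℕ => betaOrbit β (n + 1) / β ^ (n + 1) :=
    (summable_nat_add_iff 1).2 (summable_betaOrbit_div_pow hβ)
  rw [← hsummable.sum_add_tsum_nat_add M]
  exact add_le_add hhead htail

end Series

section Expectation

variable {β : ℝ}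

theorem betaOrbit_sq_div_nonneg (hβ : 0 ≤ β) (n : ℕ) : 0 ≤ betaOrbit β n ^ 2 / (2 * β ^ n) := by
  positivity

theorem summable_betaOrbit_sq_div (hβ : 1 < β) :
    Summable fun n : ℕ => betaOrbit β n ^ 2 / (2 * β ^ n) := by
  have hβ₀ : 0 < β := zero_lt_one.trans hβ
  refine .of_nonneg_of_le (betaOrbit_sq_div_nonneg hβ₀.le) (fun n => ?_)
    (summable_betaOrbit_div_pow hβ)
  have hsq : betaOrbit β n ^ 2 ≤ betaOrbit β n :=
    pow_le_of_le_one (betaOrbit_nonneg β n) (betaOrbit_le_one β n) two_ne_zero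
  have hpow : β ^ n ≤ 2 * β ^ n := le_mul_of_one_le_left (by positivity) one_le_two
  exact div_le_div₀ (betaOrbit_nonneg β n) hsq (by positivity) hpow

theorem one_half_le_tsum_betaOrbit_sq_div (hβ : 1 < β) :
    1 / 2 ≤ ∑' n : ℕ, betaOrbit β n ^ 2 / (2 * β ^ n) := by
  have hβ₀ : 0 ≤ β := zero_le_one.trans hβ.le
  calc (1 / 2 : ℝ) = betaOrbit β 0 ^ 2 / (2 * β ^ 0) := by
        rw [betaOrbit, one_pow, pow_zero, mul_one]
    _ ≤ ∑' n : ℕ, betaOrbit β n ^ 2 / (2 * β ^ n) :=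
        (summable_betaOrbit_sq_div hβ).le_tsum 0 fun n _ => betaOrbit_sq_div_nonneg hβ₀ n

theorem one_half_sub_Ebeta_le (hβ : 1 < β) :
    1 / 2 - Ebeta β ≤ 1 / 2 * ∑' n : ℕ, betaOrbit β (n + 1) / β ^ (n + 1) := by
  have hβ₀ : 0 ≤ β := zero_le_one.trans hβ.le
  set S := ∑' n : ℕ, betaOrbit β (n + 1) / β ^ (n + 1) with hS
  have hS₀ : 0 ≤ S := tsum_nonneg fun n => betaOrbit_div_pow_nonneg hβ₀ (n + 1)
  have hE : 1 / 2 * (1 - S) ≤ Ebeta β :=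
    calc 1 / 2 * (1 - S) ≤ 1 / 2 / (1 + S) := by
          rw [le_div_iff₀ (by positivity)]
          nlinarith only [sq_nonneg S]
      _ ≤ Ebeta β := by
          rw [Ebeta, tsum_betaOrbit_div_pow_eq_one_add hβ, ← hS]
          gcongr
          exact one_half_le_tsum_betaOrbit_sq_div hβ
  linarith only [hE]

end Expectation

theorem ceil_log_div_log_one_div_pos {x b : ℝ} (hx₀ : 0 < x) (hx₁ : x < 1) (hb : 1 < b) :
    0 < ⌈Real.log x / Real.log (1 / b)⌉ := by
  have hlog : Real.log (1 / b) < 0 :=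
    Real.log_neg (by positivity) ((div_lt_one (by positivity)).2 hb)
  exact Int.ceil_pos.2 (div_pos_of_neg_of_neg (Real.log_neg hx₀ hx₁) hlog)

theorem tsum_betaOrbit_succ_div_pow_le_of_two_le {β : ℝ} (hβ : 2 ≤ β) (M : ℕ) :
    ∑' n : ℕ, betaOrbit β (n + 1) / β ^ (n + 1) ≤ M * Int.fract β + (β ^ M)⁻¹ := by
  have hβ₁ : 1 < β := one_lt_two.trans_le hβ
  refine (tsum_betaOrbit_succ_div_pow_le hβ₁ M).trans ?_
  gcongr
  · exact div_le_self (Int.fract_nonneg β) hβ₁.le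
  · exact div_le_self (by positivity) (by linarith only [hβ])

theorem stmt14_general (β : ℝ) (hβ : 2 ≤ β) (hfract : Int.fract β ≠ 0) :
    let η : ℝ := Int.fract β
    let N : ℤ := ⌈Real.log η / Real.log (1 / β)⌉
    0 < N ∧
    (∑' n : ℕ, betaOrbit β (n + 1) / β ^ (n + 1)) ≤ (N : ℝ) * η + β ^ (-N) ∧
    1 / 2 - Ebeta β ≤ (1 / 2) * ((N : ℝ) * η + β ^ (-N)) := by
  intro η N
  have hβ₁ : 1 < β := one_lt_two.trans_le hβ
  have hN : 0 < N :=
    ceil_log_div_log_one_div_pos ((Int.fract_nonneg β).lt_of_ne' hfract) (Int.fract_lt_one β) hβ₁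
  have htail : ∑' n : ℕ, betaOrbit β (n + 1) / β ^ (n + 1) ≤ N * η + β ^ (-N) := by
    lift N to ℕ using hN.le with M
    simpa only [zpow_neg, zpow_natCast, Int.cast_natCast] using
      tsum_betaOrbit_succ_div_pow_le_of_two_le hβ M
  exact ⟨hN, htail, (one_half_sub_Ebeta_le hβ₁).trans (by gcongr)⟩

/-- A quantitative bound on the tail sum `∑_{n≥1} t_n(β)/βⁿ` and on `1/2 − E(β)`. -/
theorem stmt14 (β : ℝ) (h2 : 2 < β) (h3 : β < 3) :
    let η : ℝ := β - 2
    let N : ℤ := ⌈Real.log η / Real.log (1 / β)⌉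
    0 < N ∧
    (∑' n : ℕ, betaOrbit β (n + 1) / β ^ (n + 1)) ≤ (N : ℝ) * η + β ^ (-N) ∧
    1/2 - Ebeta β ≤ (1/2) * ((N : ℝ) * η + β ^ (-N)) := by
  have hη : Int.fract β = β - 2 := Int.fract_eq_iff.2 ⟨by linarith, by linarith, 2, by norm_num⟩
  simpa only [hη] using stmt14_general β h2.le (hη ▸ (sub_pos.2 h2).ne')
end

section
/- For every integer k ≥ 1 there exists a unique β_k ∈ (2,3) with β_k^k(β_k − 2) = 1, and β_k → 2 as k → ∞. For this β_k the orbit of 1 satisfies t_n(β_k) = β_k^{n−1}(β_k − 2) for 1 ≤ n ≤ k and t_n(β_k) = 0 for all n ≥ k + 1, and E(β_k) = (1/2)·(1 + ((β_k^k − 1)/(β_k − 1))·(β_k − 2)²/β_k) / (1 + k·(β_k − 2)/β_k); equivalently, |E(β_k) − 1/2| = |β_k − 2| · |(((β_k^k − 1)/(β_k − 1))(β_k − 2) − k) / (2β_k + 2k(β_k − 2))|. -/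
/-!
For an integer `a ≥ 1` the function `x ↦ x ^ k * (x - a)` increases strictly from `0` on `[a, ∞)`,
so it takes the value `1` at exactly one point `β > a`; at any fixed `c > a` its values tend to
infinity with `k`, which pushes `β` down to `a`. Since `β ^ m * (β - a) < 1` for `m < k`, the orbit
of `1` subtracts `a` in the first step and is then only multiplied by `β` until it reaches
`β ^ k * (β - a) = 1`, whose fractional part is `0`. Both series in `E(β)` are thus finite geometric
sums.
-/

open Filter Set Topology

section Root

variable {a : ℝ}

theorem strictMonoOn_pow_mul_sub (ha : 0 ≤ a) (k : ℕ) :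
    StrictMonoOn (fun x : ℝ => x ^ k * (x - a)) (Ici a) := by
  intro x hx y _ hxy
  have hx₀ : 0 ≤ x := ha.trans hx
  have hy₀ : 0 < y := hx₀.trans_lt hxy
  exact mul_lt_mul' (pow_le_pow_left₀ hx₀ hxy.le k) (sub_lt_sub_right hxy a)
    (sub_nonneg.2 hx) (pow_pos hy₀ k)

theorem exists_pow_mul_sub_eq_one (ha : 0 ≤ a) (k : ℕ) :
    ∃ x, a < x ∧ x ^ k * (x - a) = 1 := by
  have hcont : ContinuousOn (fun x : ℝ => x ^ k * (x - a)) (Icc a (a + 1)) := by fun_prop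
  have hone : (1 : ℝ) ∈ Ioc (a ^ k * (a - a)) ((a + 1) ^ k * (a + 1 - a)) := by
    simpa using one_le_pow₀ (le_add_of_nonneg_left ha)
  obtain ⟨x, hx, hroot⟩ := intermediate_value_Ioc (le_add_of_nonneg_right zero_le_one) hcont hone
  exact ⟨x, hx.1, hroot⟩

theorem tendsto_of_pow_mul_sub_eq_one (ha : 1 ≤ a) {b : ℕ → ℝ} (hab : ∀ k, a ≤ b k)
    (hroot : ∀ k, b k ^ k * (b k - a) = 1) : Tendsto b atTop (𝓝 a) := by
  refine tendsto_order.2 ⟨fun c hc => .of_forall fun k => hc.trans_le (hab k), fun c hc => ?_⟩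
  have hgrow : Tendsto (fun k : ℕ => c ^ k * (c - a)) atTop atTop :=
    (tendsto_pow_atTop_atTop_of_one_lt (ha.trans_lt hc)).atTop_mul_const (sub_pos.2 hc)
  filter_upwards [hgrow.eventually_gt_atTop 1] with k hk
  rw [← hroot k] at hk
  exact ((strictMonoOn_pow_mul_sub (zero_le_one.trans ha) k).lt_iff_lt (hab k) hc.le).1 hk

end Root

theorem betaOrbit_eq_zero_of_le {β : ℝ} {m n : ℕ} (hm : betaOrbit β m = 0) (hmn : m ≤ n) :
    betaOrbit β n = 0 := by
  induction n, hmn using Nat.le_induction with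
  | base => exact hm
  | succ n _ ih => rw [betaOrbit, ih, mul_zero, Int.fract_zero]

theorem Ebeta_eq_sum_div_sum {β : ℝ} {N : ℕ} (hN : betaOrbit β N = 0) :
    Ebeta β = (∑ n ∈ Finset.range N, betaOrbit β n ^ 2 / (2 * β ^ n)) /
      ∑ n ∈ Finset.range N, betaOrbit β n / β ^ n := by
  have hzero : ∀ n ∉ Finset.range N, betaOrbit β n = 0 := fun n hn =>
    betaOrbit_eq_zero_of_le hN (by simpa using hn)
  rw [Ebeta, tsum_eq_sum fun n hn => by rw [hzero n hn, sq, zero_mul, zero_div],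
    tsum_eq_sum fun n hn => by rw [hzero n hn, zero_div]]

/-- The numbers `β > 1` with `1 = a / β + 1 / β ^ (k + 1)`, the denominators being cleared: for
`k ≥ 1` these are the simple β-numbers whose β-expansion of `1` has the digits `a` and `1` separated
by `k - 1` zeros. -/
structure IsSimpleBetaNumber (a k : ℕ) (β : ℝ) : Prop where
  one_lt : 1 < β
  pow_mul_sub : β ^ k * (β - a) = 1

namespace IsSimpleBetaNumber

variable {a k m : ℕ} {β : ℝ}

theorem pos (h : IsSimpleBetaNumber a k β) : 0 < β :=
  one_pos.trans h.one_lt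

theorem sub_pos (h : IsSimpleBetaNumber a k β) : 0 < β - a :=
  (pos_iff_pos_of_mul_pos (h.pow_mul_sub ▸ one_pos)).1 (pow_pos h.pos k)

theorem pow_mul_sub_lt_one (h : IsSimpleBetaNumber a k β) (hm : m < k) : β ^ m * (β - a) < 1 :=
  h.pow_mul_sub ▸ mul_lt_mul_of_pos_right (pow_lt_pow_right₀ h.one_lt hm) h.sub_pos

theorem fract_pow_mul_sub (h : IsSimpleBetaNumber a k β) (hm : m < k) :
    Int.fract (β ^ m * (β - a)) = β ^ m * (β - a) :=
  Int.fract_eq_self.2 ⟨(mul_pos (pow_pos h.pos m) h.sub_pos).le, h.pow_mul_sub_lt_one hm⟩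

theorem betaOrbit_succ_eq_fract (h : IsSimpleBetaNumber a k β) (hm : m ≤ k) :
    betaOrbit β (m + 1) = Int.fract (β ^ m * (β - a)) := by
  induction m with
  | zero => rw [betaOrbit, betaOrbit, mul_one, pow_zero, one_mul, Int.fract_sub_natCast]
  | succ m ih =>
    rw [betaOrbit, ih (Nat.le_of_succ_le hm), h.fract_pow_mul_sub hm, ← mul_assoc, ← pow_succ']

theorem betaOrbit_succ (h : IsSimpleBetaNumber a k β) (hm : m < k) :
    betaOrbit β (m + 1) = β ^ m * (β - a) :=
  (h.betaOrbit_succ_eq_fract hm.le).trans (h.fract_pow_mul_sub hm)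

theorem betaOrbit_succ_self_eq_zero (h : IsSimpleBetaNumber a k β) :
    betaOrbit β (k + 1) = 0 := by
  rw [h.betaOrbit_succ_eq_fract le_rfl, h.pow_mul_sub, Int.fract_one]

theorem sum_betaOrbit_div_pow (h : IsSimpleBetaNumber a k β) :
    ∑ n ∈ Finset.range (k + 1), betaOrbit β n / β ^ n = 1 + k * (β - a) / β := by
  have hterm : ∀ m ∈ Finset.range k, betaOrbit β (m + 1) / β ^ (m + 1) = (β - a) / β := by
    intro m hm
    rw [h.betaOrbit_succ (Finset.mem_range.1 hm), pow_succ,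
      mul_div_mul_left _ _ (pow_pos h.pos m).ne']
  rw [Finset.sum_range_succ', Finset.sum_congr rfl hterm, Finset.sum_const, Finset.card_range,
    nsmul_eq_mul, betaOrbit, pow_zero, div_one, add_comm, mul_div_assoc]

theorem sum_betaOrbit_sq_div_pow (h : IsSimpleBetaNumber a k β) :
    ∑ n ∈ Finset.range (k + 1), betaOrbit β n ^ 2 / (2 * β ^ n) =
      1 / 2 * (1 + (β ^ k - 1) / (β - 1) * (β - a) ^ 2 / β) := by
  have hterm : ∀ m ∈ Finset.range k, betaOrbit β (m + 1) ^ 2 / (2 * β ^ (m + 1)) =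
      β ^ m * ((β - a) ^ 2 / (2 * β)) := by
    intro m hm
    have hβ : β ≠ 0 := h.pos.ne'
    rw [h.betaOrbit_succ (Finset.mem_range.1 hm)]
    field_simp
    ring
  rw [Finset.sum_range_succ', Finset.sum_congr rfl hterm, ← Finset.sum_mul,
    geom_sum_eq h.one_lt.ne', betaOrbit]
  ring

theorem Ebeta_eq (h : IsSimpleBetaNumber a k β) :
    Ebeta β = 1 / 2 * (1 + (β ^ k - 1) / (β - 1) * (β - a) ^ 2 / β) /
      (1 + k * (β - a) / β) := by
  rw [Ebeta_eq_sum_div_sum h.betaOrbit_succ_self_eq_zero, h.sum_betaOrbit_sq_div_pow,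
    h.sum_betaOrbit_div_pow]

theorem Ebeta_sub_half (h : IsSimpleBetaNumber a k β) :
    Ebeta β - 1 / 2 = (β - a) *
      (((β ^ k - 1) / (β - 1) * (β - a) - k) / (2 * β + 2 * k * (β - a))) := by
  have hβ : 0 < β := h.pos
  have hsub : 0 < β - a := h.sub_pos
  have hden_div : 1 + k * (β - a) / β = (β + k * (β - a)) / β := by field_simp
  have hden_two : 2 * β + 2 * k * (β - a) = 2 * (β + k * (β - a)) := by ring
  rw [h.Ebeta_eq, hden_div, hden_two]
  generalize (β ^ k - 1) / (β - 1) = S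
  field_simp
  ring

end IsSimpleBetaNumber

theorem stmt15_general (a : ℕ) (ha : 1 ≤ a) :
    ∃ b : ℕ → ℝ,
      (∀ k : ℕ, 1 ≤ k →
        b k ∈ Ioo (a : ℝ) (a + 1) ∧
        (b k) ^ k * (b k - a) = 1 ∧
        (∀ β ∈ Ioo (a : ℝ) (a + 1), β ^ k * (β - a) = 1 → β = b k) ∧
        (∀ n : ℕ, 1 ≤ n → n ≤ k → betaOrbit (b k) n = (b k) ^ (n - 1) * (b k - a)) ∧
        (∀ n : ℕ, k + 1 ≤ n → betaOrbit (b k) n = 0) ∧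
        Ebeta (b k) =
          (1 / 2) * (1 + ((b k) ^ k - 1) / (b k - 1) * (b k - a) ^ 2 / b k) /
            (1 + (k : ℝ) * (b k - a) / b k) ∧
        |Ebeta (b k) - 1 / 2| =
          |b k - a| *
            |(((b k) ^ k - 1) / (b k - 1) * (b k - a) - (k : ℝ)) /
              (2 * b k + 2 * (k : ℝ) * (b k - a))|) ∧
      Tendsto b atTop (𝓝 a) := by
  have ha₁ : (1 : ℝ) ≤ a := mod_cast ha
  choose b hab hroot using exists_pow_mul_sub_eq_one (a := (a : ℝ)) (Nat.cast_nonneg a)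
  refine ⟨b, fun k hk => ?_, tendsto_of_pow_mul_sub_eq_one ha₁ (fun k => (hab k).le) hroot⟩
  have hb : IsSimpleBetaNumber a k (b k) := ⟨ha₁.trans_lt (hab k), hroot k⟩
  have hlt : b k - a < 1 := by simpa only [pow_zero, one_mul] using hb.pow_mul_sub_lt_one hk
  refine ⟨⟨hab k, sub_lt_iff_lt_add'.1 hlt⟩, hroot k, fun β hβ h => ?_, fun n hn hnk => ?_,
    fun _ => betaOrbit_eq_zero_of_le hb.betaOrbit_succ_self_eq_zero,
    hb.Ebeta_eq, by rw [hb.Ebeta_sub_half, abs_mul]⟩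
  · exact (strictMonoOn_pow_mul_sub (Nat.cast_nonneg a) k).injOn hβ.1.le (hab k).le
      (h.trans (hroot k).symm)
  · obtain ⟨m, rfl⟩ := Nat.exists_eq_add_of_le' hn
    exact hb.betaOrbit_succ hnk

/-- For every `k ≥ 1` there is a unique `β_k ∈ (2,3)` with `β_k^k (β_k − 2) = 1`;
`β_k → 2`, the orbit of `1` under `T_{β_k}` is explicit, and `E(β_k)` is given by an
explicit rational expression in `β_k`. -/
theorem stmt15 :
    ∃ b : ℕ → ℝ,
      (∀ k : ℕ, 1 ≤ k →
        b k ∈ Set.Ioo (2:ℝ) 3 ∧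
        (b k) ^ k * (b k - 2) = 1 ∧
        (∀ β ∈ Set.Ioo (2:ℝ) 3, β ^ k * (β - 2) = 1 → β = b k) ∧
        (∀ n : ℕ, 1 ≤ n → n ≤ k → betaOrbit (b k) n = (b k) ^ (n - 1) * (b k - 2)) ∧
        (∀ n : ℕ, k + 1 ≤ n → betaOrbit (b k) n = 0) ∧
        Ebeta (b k) =
          (1/2) * (1 + ((b k) ^ k - 1) / (b k - 1) * (b k - 2) ^ 2 / b k) /
            (1 + (k : ℝ) * (b k - 2) / b k) ∧
        |Ebeta (b k) - 1/2| =
          |b k - 2| *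
            |(((b k) ^ k - 1) / (b k - 1) * (b k - 2) - (k : ℝ)) /
              (2 * b k + 2 * (k : ℝ) * (b k - 2))|) ∧
      Filter.Tendsto b Filter.atTop (nhds 2) := by
  simpa only [Nat.cast_ofNat, two_add_one_eq_three] using stmt15_general 2 one_le_two
end
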